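/- arXiv:1905.00084 — 2 statements merged into one kernel-verified Lean document; each statement's English description precedes it below -/
import Mathlib

section
/- For every natural number n ≥ 1 and every vector a = (a_1,…,a_n) with 0 ≤ a_j ≤ 1 for all j, one has 1 − ∏_{j=1}^n (1 − a_j) ≥ (1 − (1 − 1/n)^n) · min(1, ∑_{j=1}^n a_j). -/
/-!
By AM-GM the product is at most `(1 - S / n) ^ n`, where `S` is the sum of the `a j`, and this only
grows when `S` is replaced by `m = min 1 S`. As a function of `m ∈ [0, 1]`, the convex function
`(1 - m / n) ^ n` lies below its chord `1 - m * (1 - (1 - 1 / n) ^ n)`.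
-/

section AMGM

variable {ι : Type*} {s : Finset ι}

theorem prod_le_arith_mean_pow_card (hs : s.Nonempty) {z : ι → ℝ} (hz : ∀ i ∈ s, 0 ≤ z i) :
    ∏ i ∈ s, z i ≤ ((∑ i ∈ s, z i) / s.card) ^ s.card := by
  have amgm : (∏ i ∈ s, z i) ^ (s.card : ℝ)⁻¹ ≤ (∑ i ∈ s, z i) / s.card := by
    simpa using Real.geom_mean_le_arith_mean s 1 z (by simp) (by simpa using hs) hz
  have hprod : 0 ≤ ∏ i ∈ s, z i := Finset.prod_nonneg hz
  calc ∏ i ∈ s, z i = ((∏ i ∈ s, z i) ^ (s.card : ℝ)⁻¹) ^ s.card :=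
        (Real.rpow_inv_natCast_pow hprod hs.card_ne_zero).symm
    _ ≤ ((∑ i ∈ s, z i) / s.card) ^ s.card :=
        pow_le_pow_left₀ (Real.rpow_nonneg hprod _) amgm _

theorem prod_one_sub_le_one_sub_mean_pow_card (hs : s.Nonempty) {a : ι → ℝ}
    (ha : ∀ i ∈ s, a i ≤ 1) :
    ∏ i ∈ s, (1 - a i) ≤ (1 - (∑ i ∈ s, a i) / s.card) ^ s.card := by
  have hcard : (s.card : ℝ) ≠ 0 := Nat.cast_ne_zero.mpr hs.card_ne_zero
  have hmean : (∑ i ∈ s, (1 - a i)) / s.card = 1 - (∑ i ∈ s, a i) / s.card := by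
    rw [Finset.sum_sub_distrib, Finset.sum_const, nsmul_one, sub_div, div_self hcard]
  rw [← hmean]
  exact prod_le_arith_mean_pow_card hs fun i hi => sub_nonneg.mpr (ha i hi)

end AMGM

theorem one_sub_mul_pow_le_one_sub_mul {R : Type*} [CommRing R] [LinearOrder R]
    [IsStrictOrderedRing R] {t x : R} (ht₀ : 0 ≤ t) (ht₁ : t ≤ 1) (hx : x ≤ 1) (n : ℕ) :
    (1 - t * x) ^ n ≤ 1 - t * (1 - (1 - x) ^ n) := by
  have chord : ((1 - t) * 1 + t * (1 - x)) ^ n ≤ (1 - t) * 1 ^ n + t * (1 - x) ^ n :=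
    (convexOn_pow n).2 (Set.mem_Ici.mpr zero_le_one) (Set.mem_Ici.mpr (sub_nonneg.mpr hx))
      (sub_nonneg.mpr ht₁) ht₀ (sub_add_cancel 1 t)
  calc (1 - t * x) ^ n = ((1 - t) * 1 + t * (1 - x)) ^ n := by ring
    _ ≤ (1 - t) * 1 ^ n + t * (1 - x) ^ n := chord
    _ = 1 - t * (1 - (1 - x) ^ n) := by rw [one_pow]; ring

theorem pickup_prob_lower_bound_dim_general {ι : Type*} {s : Finset ι} (hs : s.Nonempty)
    {a : ι → ℝ} (ha : ∀ j ∈ s, a j ≤ 1) (hsum : 0 ≤ ∑ j ∈ s, a j) :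
    (1 - (1 - 1 / (s.card : ℝ)) ^ s.card) * min 1 (∑ j ∈ s, a j) ≤ 1 - ∏ j ∈ s, (1 - a j) := by
  set S := ∑ j ∈ s, a j
  set m := min 1 S
  have hcard : (1 : ℝ) ≤ s.card := Nat.one_le_cast.mpr hs.card_pos
  have hS : S / s.card ≤ 1 :=
    div_le_one_of_le₀ (by simpa using Finset.sum_le_card_nsmul s a 1 ha) (Nat.cast_nonneg _)
  have hmS : m / s.card ≤ S / s.card := by gcongr; exact min_le_right 1 S
  suffices ∏ j ∈ s, (1 - a j) ≤ 1 - m * (1 - (1 - 1 / (s.card : ℝ)) ^ s.card) by linarith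
  calc ∏ j ∈ s, (1 - a j) ≤ (1 - S / s.card) ^ s.card := prod_one_sub_le_one_sub_mean_pow_card hs ha
    _ ≤ (1 - m / s.card) ^ s.card := pow_le_pow_left₀ (sub_nonneg.mpr hS) (by linarith) _
    _ = (1 - m * (1 / s.card)) ^ s.card := by rw [mul_one_div]
    _ ≤ 1 - m * (1 - (1 - 1 / (s.card : ℝ)) ^ s.card) :=
        one_sub_mul_pow_le_one_sub_mul (le_min zero_le_one hsum) (min_le_left 1 S)
          (div_le_one_of_le₀ hcard (Nat.cast_nonneg _)) _

theorem pickup_prob_lower_bound_dim (n : ℕ) (hn : 1 ≤ n) (a : Fin n → ℝ)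
    (h : ∀ j, 0 ≤ a j ∧ a j ≤ 1) :
    (1 - (1 - 1 / (n : ℝ)) ^ n) * min 1 (∑ j, a j) ≤ 1 - ∏ j, (1 - a j) := by
  have : NeZero n := ⟨Nat.one_le_iff_ne_zero.mp hn⟩
  simpa only [Finset.card_univ, Fintype.card_fin] using
    pickup_prob_lower_bound_dim_general Finset.univ_nonempty (fun j _ => (h j).2)
      (Finset.sum_nonneg fun j _ => (h j).1)
end

section
/- For every natural number n and every vector a = (a_1,…,a_n) with 0 ≤ a_j ≤ 1 for all j, one has (1 − 1/e) · min(1, ∑_{j=1}^n a_j) ≤ 1 − ∏_{j=1}^n (1 − a_j) ≤ min(1, ∑_{j=1}^n a_j), where e is Euler's number. -/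
/-!
The upper bound is the union bound together with the nonnegativity of the product. For the lower
bound, `1 - x ≤ exp (-x)` gives `∏ (1 - aⱼ) ≤ exp (-∑ aⱼ) ≤ exp (-m)` with `m = min 1 (∑ aⱼ)`, and,
`m` lying in `[0, 1]`, the convex function `exp (-·)` is at `m` below its chord over `[0, 1]`, which
is `1 - (1 - 1 / e) * m`.
-/

open Finset

theorem one_sub_sum_le_prod_one_sub {ι R : Type*} [CommRing R] [PartialOrder R] [IsOrderedRing R]
    {s : Finset ι} {a : ι → R} (h₀ : ∀ i ∈ s, 0 ≤ a i) (h₁ : ∀ i ∈ s, a i ≤ 1) :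
    1 - ∑ i ∈ s, a i ≤ ∏ i ∈ s, (1 - a i) := by
  induction s using Finset.cons_induction with
  | empty => simp
  | cons i s hi ih =>
    rw [forall_mem_cons] at h₀ h₁
    have prod_le_one : ∏ j ∈ s, (1 - a j) ≤ 1 :=
      Finset.prod_le_one (fun j hj ↦ sub_nonneg.2 (h₁.2 j hj))
        fun j hj ↦ sub_le_self 1 (h₀.2 j hj)
    calc 1 - ∑ j ∈ cons i s hi, a j
      _ = (1 - ∑ j ∈ s, a j) - a i := by rw [sum_cons]; ring
      _ ≤ ∏ j ∈ s, (1 - a j) - a i * ∏ j ∈ s, (1 - a j) :=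
        sub_le_sub (ih h₀.2 h₁.2) (mul_le_of_le_one_right h₀.1 prod_le_one)
      _ = ∏ j ∈ cons i s hi, (1 - a j) := by rw [prod_cons]; ring

theorem one_sub_prod_one_sub_le_min_one_sum {ι R : Type*} [CommRing R] [LinearOrder R]
    [IsOrderedRing R] {s : Finset ι} {a : ι → R} (h₀ : ∀ i ∈ s, 0 ≤ a i)
    (h₁ : ∀ i ∈ s, a i ≤ 1) :
    1 - ∏ i ∈ s, (1 - a i) ≤ min 1 (∑ i ∈ s, a i) :=
  le_min (sub_le_self 1 (prod_nonneg fun i hi ↦ sub_nonneg.2 (h₁ i hi)))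
    (sub_le_comm.1 (one_sub_sum_le_prod_one_sub h₀ h₁))

theorem prod_one_sub_le_exp_neg_sum {ι : Type*} {s : Finset ι} {a : ι → ℝ}
    (h₁ : ∀ i ∈ s, a i ≤ 1) : ∏ i ∈ s, (1 - a i) ≤ Real.exp (-∑ i ∈ s, a i) := by
  rw [← sum_neg_distrib, Real.exp_sum]
  exact prod_le_prod (fun i hi ↦ sub_nonneg.2 (h₁ i hi)) fun i _ ↦ Real.one_sub_le_exp_neg (a i)

theorem exp_mul_le_one_sub_add_mul_exp {t : ℝ} (ht₀ : 0 ≤ t) (ht₁ : t ≤ 1) (c : ℝ) :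
    Real.exp (t * c) ≤ 1 - t + t * Real.exp c := by
  simpa using convexOn_exp.2 (Set.mem_univ 0) (Set.mem_univ c) (sub_nonneg.2 ht₁) ht₀
    (sub_add_cancel 1 t)

theorem mul_min_one_sum_le_one_sub_prod_one_sub {ι : Type*} {s : Finset ι} {a : ι → ℝ}
    (h₁ : ∀ i ∈ s, a i ≤ 1) (hsum : 0 ≤ ∑ i ∈ s, a i) :
    (1 - 1 / Real.exp 1) * min 1 (∑ i ∈ s, a i) ≤ 1 - ∏ i ∈ s, (1 - a i) := by
  set m := min 1 (∑ i ∈ s, a i)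
  have prod_le : ∏ i ∈ s, (1 - a i) ≤ 1 - m + m * (1 / Real.exp 1) :=
    calc ∏ i ∈ s, (1 - a i)
      _ ≤ Real.exp (-∑ i ∈ s, a i) := prod_one_sub_le_exp_neg_sum h₁
      _ ≤ Real.exp (m * -1) := by
        rw [mul_neg_one]
        gcongr
        exact min_le_right _ _
      _ ≤ 1 - m + m * Real.exp (-1) :=
        exp_mul_le_one_sub_add_mul_exp (le_min zero_le_one hsum) (min_le_left _ _) (-1)
      _ = 1 - m + m * (1 / Real.exp 1) := by rw [Real.exp_neg, one_div]
  linarith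

theorem pickup_prob_sandwich (n : ℕ) (a : Fin n → ℝ)
    (h : ∀ j, 0 ≤ a j ∧ a j ≤ 1) :
    (1 - 1 / Real.exp 1) * min 1 (∑ j, a j) ≤ 1 - ∏ j, (1 - a j) ∧
      1 - ∏ j, (1 - a j) ≤ min 1 (∑ j, a j) := by
  have h₀ : ∀ j ∈ univ, 0 ≤ a j := fun j _ ↦ (h j).1
  have h₁ : ∀ j ∈ univ, a j ≤ 1 := fun j _ ↦ (h j).2
  exact ⟨mul_min_one_sum_le_one_sub_prod_one_sub h₁ (sum_nonneg h₀),
    one_sub_prod_one_sub_le_min_one_sum h₀ h₁⟩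
end
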